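/- arXiv:1411.6354 — 2 statements merged into one kernel-verified Lean document; each statement's English description precedes it below -/
import Mathlib

section
/- Let w be a bounded weight structure on a triangulated category C, let D be a full triangulated subcategory of C such that w restricts to D, let l : C → C/D be the Verdier quotient functor, let w_{C/D} be the induced weight structure on C/D, and let n ∈ ℤ and M ∈ Obj C. (1) If l(M) ∈ (C/D)_{w_{C/D}≥−n}, then for any distinguished triangle w_{≤−n−1}M →g M →h w_{≥−n}M → (w_{≤−n−1}M)[1] with w_{≤−n−1}M ∈ C_{w≤−n−1} and w_{≥−n}M ∈ C_{w≥−n}, one has l(g) = 0 and l(h) is a split monomorphism in C/D (it admits a retraction). (2) Conversely, if there exist N ∈ C_{w≥−n} and a morphism h : M → N in C such that l(h) is a split monomorphism in C/D, then l(M) ∈ (C/D)_{w_{C/D}≥−n}. -/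
/-!
The heart of the matter is orthogonality in the quotient: if `A ∈ C_{w≤0}` and `N ∈ C_{w≥0}`, then
every morphism `φ : L(A) ⟶ L(N[1])` vanishes (`map_orthogonal`).

To prove it, `φ` is written as a fraction `L(s)⁻¹ ≫ L(f)` with `s : A' ⟶ A` inverted by `L` and `A'`
still left orthogonal to `C_{w≥0}[1]` (`exists_fraction`); then `f = 0`. Such a fraction is built
by induction along a zigzag representing `φ`. The only nontrivial step is to pull back
`t : Y ⟶ X` with cone `Z ∈ D` along `f : A ⟶ X`. Since `w` restricts to `D`, there is a weight
decomposition `Z₀ ⟶ Z ⟶ Z₁` inside `D`; as `A` is orthogonal to `Z₁`, the composite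
`A ⟶ X ⟶ Z` factors through `Z₀`, and the fibre `A'` of `A ⟶ Z₀` has the desired
properties, being an extension of `A` by `Z₀[-1]` (`exists_ore_square`). Inducting along zigzags
instead of working with a calculus of fractions avoids the octahedral axiom, which is not available
in `C`.

For part (1), `L(M)[n+1]` is a retract of some `L(N[1])` with `N ∈ C_{w≥0}`, so orthogonality kills
`L(g)[n+1]`, hence `L(g)`, and the image triangle yields a retraction of `L(h)`. For part (2),
`L(M)[n]` is a retract of `L(N)[n] ≅ L(N[n])`.
-/

open CategoryTheory CategoryTheory.Limits CategoryTheory.Pretriangulated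

namespace CWH

/-- `X` is a retract of `Y`. -/
def IsRetract {C : Type*} [Category C] (X Y : C) : Prop :=
  ∃ (i : X ⟶ Y) (r : Y ⟶ X), i ≫ r = 𝟙 X

/-- The Karoubi-closure of a class of objects: all retracts of its objects. -/
def retractClosure {C : Type*} [Category C] (S : Set C) : Set C :=
  {X : C | ∃ Y ∈ S, IsRetract X Y}

variable (C : Type*) [Category C] [HasZeroObject C] [HasShift C ℤ]
  [Preadditive C] [∀ n : ℤ, (shiftFunctor C n).Additive] [Pretriangulated C]

/-- A weight structure on a (pre)triangulated category (homological convention):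
a pair of retract-closed classes `LE = C_{w≤0}` and `GE = C_{w≥0}` such that
`C_{w≤0} ⊆ C_{w≤0}[1]`, `C_{w≥0}[1] ⊆ C_{w≥0}`, `Hom(C_{w≤0}, C_{w≥0}[1]) = 0`,
and every object admits a weight decomposition. -/
structure WeightStructure where
  LE : Set C
  GE : Set C
  retract_LE : ∀ ⦃X Y : C⦄, IsRetract X Y → Y ∈ LE → X ∈ LE
  retract_GE : ∀ ⦃X Y : C⦄, IsRetract X Y → Y ∈ GE → X ∈ GE
  shift_LE : ∀ ⦃X : C⦄, X ∈ LE → X⟦(-1 : ℤ)⟧ ∈ LE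
  shift_GE : ∀ ⦃X : C⦄, X ∈ GE → X⟦(1 : ℤ)⟧ ∈ GE
  orthogonal : ∀ ⦃X Y : C⦄, X ∈ LE → Y ∈ GE → ∀ f : X ⟶ Y⟦(1 : ℤ)⟧, f = 0
  decomp : ∀ M : C, ∃ (X Y : C) (f : X ⟶ M) (g : M ⟶ Y) (h : Y ⟶ X⟦(1 : ℤ)⟧),
    Triangle.mk f g h ∈ (distTriang C) ∧ X ∈ LE ∧ Y⟦(-1 : ℤ)⟧ ∈ GE

variable {C}

namespace WeightStructure

variable (w : WeightStructure C)

/-- `C_{w≤i} = C_{w≤0}[i]`. -/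
def le (i : ℤ) : Set C := {X : C | X⟦(-i)⟧ ∈ w.LE}

/-- `C_{w≥i} = C_{w≥0}[i]`. -/
def ge (i : ℤ) : Set C := {X : C | X⟦(-i)⟧ ∈ w.GE}

/-- `C_{w=i} = C_{w≤i} ∩ C_{w≥i}`. -/
def eqw (i : ℤ) : Set C := w.le i ∩ w.ge i

/-- `w` is bounded if every object lies in some `C_{w≤i}` and in some `C_{w≥i}`. -/
def IsBounded : Prop := ∀ X : C, (∃ i : ℤ, X ∈ w.le i) ∧ (∃ i : ℤ, X ∈ w.ge i)

end WeightStructure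

/-- The extension-closure of a class `S` of objects: the smallest class containing
the zero objects and `S` and closed under extensions (distinguished triangles). -/
inductive ExtClosure (S : Set C) : C → Prop
  | zero (X : C) : IsZero X → ExtClosure S X
  | of (X : C) : X ∈ S → ExtClosure S X
  | ext {A E B : C} (f : A ⟶ E) (g : E ⟶ B) (h : B ⟶ A⟦(1 : ℤ)⟧) :
      Triangle.mk f g h ∈ (distTriang C) → ExtClosure S A → ExtClosure S B → ExtClosure S E

/-- The smallest full Karoubi-closed (strict) triangulated subcategory containing `S`:
closure under zero objects, shifts, cones and retracts. -/
inductive TriangClosure (S : Set C) : C → Prop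
  | of (X : C) : X ∈ S → TriangClosure S X
  | zero (X : C) : IsZero X → TriangClosure S X
  | shift (X : C) (n : ℤ) : TriangClosure S X → TriangClosure S (X⟦n⟧)
  | ext {X Y Z : C} (f : X ⟶ Y) (g : Y ⟶ Z) (h : Z ⟶ X⟦(1 : ℤ)⟧) :
      Triangle.mk f g h ∈ (distTriang C) → TriangClosure S X → TriangClosure S Y →
      TriangClosure S Z
  | retract (X Y : C) : IsRetract X Y → TriangClosure S Y → TriangClosure S X

/-- A (strict) full triangulated subcategory, given by its class of objects:
it contains the zero objects and is closed under shifts and under the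
two-out-of-three property for distinguished triangles. -/
structure IsTriangulatedSub (P : Set C) : Prop where
  zero : ∀ X : C, IsZero X → X ∈ P
  shift : ∀ X ∈ P, ∀ n : ℤ, X⟦n⟧ ∈ P
  ext₂ : ∀ ⦃X Y Z : C⦄ (f : X ⟶ Y) (g : Y ⟶ Z) (h : Z ⟶ X⟦(1 : ℤ)⟧),
    Triangle.mk f g h ∈ (distTriang C) → X ∈ P → Z ∈ P → Y ∈ P
  ext₃ : ∀ ⦃X Y Z : C⦄ (f : X ⟶ Y) (g : Y ⟶ Z) (h : Z ⟶ X⟦(1 : ℤ)⟧),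
    Triangle.mk f g h ∈ (distTriang C) → X ∈ P → Y ∈ P → Z ∈ P
  ext₁ : ∀ ⦃X Y Z : C⦄ (f : X ⟶ Y) (g : Y ⟶ Z) (h : Z ⟶ X⟦(1 : ℤ)⟧),
    Triangle.mk f g h ∈ (distTriang C) → Y ∈ P → Z ∈ P → X ∈ P

/-- A weight structure on the full (triangulated) subcategory of `C` whose objects
are given by the class `P`; retracts are taken inside `P` and the distinguished
triangles of the subcategory are the distinguished triangles of `C` with vertices
in `P`. -/
structure IsWeightStructureOn (P LEs GEs : Set C) : Prop where
  le_sub : LEs ⊆ P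
  ge_sub : GEs ⊆ P
  retract_le : ∀ ⦃X Y : C⦄, X ∈ P → IsRetract X Y → Y ∈ LEs → X ∈ LEs
  retract_ge : ∀ ⦃X Y : C⦄, X ∈ P → IsRetract X Y → Y ∈ GEs → X ∈ GEs
  shift_le : ∀ ⦃X : C⦄, X ∈ LEs → X⟦(-1 : ℤ)⟧ ∈ LEs
  shift_ge : ∀ ⦃X : C⦄, X ∈ GEs → X⟦(1 : ℤ)⟧ ∈ GEs
  orthogonal : ∀ ⦃X Y : C⦄, X ∈ LEs → Y ∈ GEs → ∀ f : X ⟶ Y⟦(1 : ℤ)⟧, f = 0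
  decomp : ∀ M ∈ P, ∃ (X Y : C) (f : X ⟶ M) (g : M ⟶ Y) (h : Y ⟶ X⟦(1 : ℤ)⟧),
    Triangle.mk f g h ∈ (distTriang C) ∧ X ∈ LEs ∧ Y⟦(-1 : ℤ)⟧ ∈ GEs

/-- The class of morphisms of `C` whose cone lies in `P`; the Verdier quotient
`C/P` is the localization of `C` at this class. -/
def coneIn (P : Set C) : MorphismProperty C := fun X Y f =>
  ∃ (Z : C) (g : Y ⟶ Z) (h : Z ⟶ X⟦(1 : ℤ)⟧),
    Triangle.mk f g h ∈ (distTriang C) ∧ Z ∈ P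

/-- A weight Postnikov tower for `M`: choices of weight truncations `trunc l = w_{≤l}M`
(with cones `conePt l = w_{≥l+1}M`), of the connecting morphisms between them that are
compatible with `𝟙 M`, and of the distinguished triangles
`w_{≤l}M → w_{≤l+1}M → M^{-l-1}[l+1] → (w_{≤l}M)[1]`; the objects `termAt l = M^{-l}`
lie in the heart and are the terms of the associated weight complex `t(M)`, whose
boundary morphisms `bd (l+1) l : M^{-l-1} → M^{-l}` are obtained by composing the
connecting morphisms of two consecutive triangles. -/
structure WeightPostnikovTower (w : WeightStructure C) (M : C) where
  trunc : ℤ → C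
  trunc_mem : ∀ l : ℤ, trunc l ∈ w.le l
  ι : ∀ l : ℤ, trunc l ⟶ M
  conePt : ℤ → C
  cone_mem : ∀ l : ℤ, conePt l ∈ w.ge (l + 1)
  coneπ : ∀ l : ℤ, M ⟶ conePt l
  coneδ : ∀ l : ℤ, conePt l ⟶ (trunc l)⟦(1 : ℤ)⟧
  trunc_dist : ∀ l : ℤ, Triangle.mk (ι l) (coneπ l) (coneδ l) ∈ (distTriang C)
  step : ∀ l : ℤ, trunc l ⟶ trunc (l + 1)
  step_ι : ∀ l : ℤ, step l ≫ ι (l + 1) = ι l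
  termAt : ℤ → C
  term_mem : ∀ l : ℤ, termAt l ∈ w.LE ∧ termAt l ∈ w.GE
  sπ : ∀ l : ℤ, trunc l ⟶ (termAt l)⟦l⟧
  sδ : ∀ l : ℤ, (termAt (l + 1))⟦(l + 1 : ℤ)⟧ ⟶ (trunc l)⟦(1 : ℤ)⟧
  step_dist : ∀ l : ℤ, Triangle.mk (step l) (sπ (l + 1)) (sδ l) ∈ (distTriang C)
  bd : ∀ i j : ℤ, termAt i ⟶ termAt j
  bd_shape : ∀ i j : ℤ, j + 1 ≠ i → bd i j = 0
  bd_eq : ∀ l : ℤ,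
    (shiftFunctor C (l + 1)).map (bd (l + 1) l) ≫
      (shiftFunctorAdd' C l 1 (l + 1) rfl).hom.app (termAt l) =
    sδ l ≫ (shiftFunctor C (1 : ℤ)).map (sπ l)

/-- The differential of the weight complex associated to a weight Postnikov tower,
in "homological" indexing: the `l`-th term `termAt l` is the `(-l)`-th term `M^{-l}`
of the weight complex. -/
def towerD {w : WeightStructure C} {M : C} (T : WeightPostnikovTower w M) :
    ∀ l : ℤ, T.termAt (l + 1) ⟶ T.termAt l :=
  fun l => T.bd (l + 1) l

section Complexes

variable {X Y : ℤ → C}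

/-- A morphism of ("homologically indexed") complexes. -/
def IsChainMapDown (X Y : ℤ → C) (dX : ∀ l : ℤ, X (l + 1) ⟶ X l)
    (dY : ∀ l : ℤ, Y (l + 1) ⟶ Y l) (f : ∀ l : ℤ, X l ⟶ Y l) : Prop :=
  ∀ l : ℤ, f (l + 1) ≫ dY l = dX l ≫ f l

/-- Two families of morphisms of complexes are chain homotopic. -/
def ChainHomotopicDown (X Y : ℤ → C) (dX : ∀ l : ℤ, X (l + 1) ⟶ X l)
    (dY : ∀ l : ℤ, Y (l + 1) ⟶ Y l) (f g : ∀ l : ℤ, X l ⟶ Y l) : Prop :=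
  ∃ s : ∀ l : ℤ, X l ⟶ Y (l + 1),
    ∀ l : ℤ, f (l + 1) - g (l + 1) = s (l + 1) ≫ dY (l + 1) + dX l ≫ s l

/-- Two complexes are homotopy equivalent (i.e., isomorphic in the homotopy category). -/
def HomotopyEquivDown (X Y : ℤ → C) (dX : ∀ l : ℤ, X (l + 1) ⟶ X l)
    (dY : ∀ l : ℤ, Y (l + 1) ⟶ Y l) : Prop :=
  ∃ (f : ∀ l : ℤ, X l ⟶ Y l) (g : ∀ l : ℤ, Y l ⟶ X l),
    IsChainMapDown X Y dX dY f ∧ IsChainMapDown Y X dY dX g ∧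
    ChainHomotopicDown X X dX dX (fun l => f l ≫ g l) (fun l => 𝟙 (X l)) ∧
    ChainHomotopicDown Y Y dY dY (fun l => g l ≫ f l) (fun l => 𝟙 (Y l))

end Complexes

/-- `A` is left orthogonal to `C_{w≥0}[1]`. -/
def LeftOrth (w : WeightStructure C) (A : C) : Prop :=
  ∀ ⦃Y : C⦄, Y ∈ w.GE → ∀ f : A ⟶ Y⟦(1 : ℤ)⟧, f = 0

/-- Orthogonality against `Y` with `Y[-1] ∈ C_{w≥0}`, the form in which the third vertex of a weight
decomposition comes. -/
lemma LeftOrth.eq_zero {w : WeightStructure C} {A : C} (hA : LeftOrth w A) {Y : C}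
    (hY : Y⟦(-1 : ℤ)⟧ ∈ w.GE) (f : A ⟶ Y) : f = 0 := by
  let e : (Y⟦(-1 : ℤ)⟧)⟦(1 : ℤ)⟧ ≅ Y := (shiftEquiv C (1 : ℤ)).counitIso.app Y
  rw [← cancel_mono e.inv, zero_comp]
  exact hA hY _

/-- The class of objects left orthogonal to `C_{w≥0}[1]` is closed under extensions, here in the
form: it contains the fibre of any `A ⟶ Z` with `A` in it and `Z ∈ C_{w≤0}`. -/
lemma LeftOrth.fibre {w : WeightStructure C} {A' A Z : C} {s : A' ⟶ A} {v : A ⟶ Z}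
    {d : Z ⟶ A'⟦(1 : ℤ)⟧} (hT : Triangle.mk s v d ∈ (distTriang C))
    (hA : LeftOrth w A) (hZ : Z ∈ w.LE) : LeftOrth w A' := by
  intro Y hY f
  obtain ⟨g, hg⟩ := Triangle.yoneda_exact₂ _ (inv_rot_of_distTriang _ hT) f
    (w.orthogonal (w.shift_LE hZ) hY _)
  have hg0 : g = 0 := hA hY g
  rw [hg, hg0]
  exact comp_zero

/-- A morphism `t` with cone in `P` can be pulled back along any `f : A ⟶ X` with `A` left
orthogonal to `C_{w≥0}[1]`, in such a way that the new source is again left orthogonal. -/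
lemma exists_ore_square {w : WeightStructure C} {P : Set C}
    (hres : IsWeightStructureOn P (P ∩ w.LE) (P ∩ w.GE)) {A X Y : C} (hA : LeftOrth w A)
    (f : A ⟶ X) (t : Y ⟶ X) (ht : coneIn P t) :
    ∃ (A' : C) (s : A' ⟶ A) (f' : A' ⟶ Y), LeftOrth w A' ∧ coneIn P s ∧ s ≫ f = f' ≫ t := by
  obtain ⟨Z, p, q, hT, hZ⟩ := ht
  obtain ⟨Z₀, Z₁, u, u', d, hZT, hZ₀, hZ₁⟩ := hres.decomp Z hZ
  obtain ⟨v, hv⟩ : ∃ v : A ⟶ Z₀, f ≫ p = v ≫ u :=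
    Triangle.coyoneda_exact₂ _ hZT (f ≫ p) (hA.eq_zero hZ₁.2 _)
  obtain ⟨A', s, d', hs⟩ := distinguished_cocone_triangle₁ v
  have hsv : s ≫ v = 0 := comp_distTriang_mor_zero₁₂ _ hs
  obtain ⟨f', hf'⟩ : ∃ f' : A' ⟶ Y, s ≫ f = f' ≫ t := by
    refine Triangle.coyoneda_exact₂ _ hT (s ≫ f) ?_
    change (s ≫ f) ≫ p = 0
    rw [Category.assoc, hv, ← Category.assoc, hsv, zero_comp]
  exact ⟨A', s, f', hA.fibre hs hZ₀.2, ⟨Z₀, v, d', hs, hZ₀.1⟩, hf'⟩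

section Quotient

variable {E : Type*} [Category E]

/-- Morphisms in the quotient out of `L(A)`, with `A` left orthogonal to `C_{w≥0}[1]`, are
fractions whose denominator has a left orthogonal source. The denominator is only asked to be
inverted by `L`: without the octahedral axiom `coneIn P` need not be stable under composition. -/
lemma exists_fraction {w : WeightStructure C} {P : Set C}
    (hres : IsWeightStructureOn P (P ∩ w.LE) (P ∩ w.GE))
    (L : C ⥤ E) [L.IsLocalization (coneIn P)] {A Y : C} (hA : LeftOrth w A)
    (φ : L.obj A ⟶ L.obj Y) :
    ∃ (A' : C) (s : A' ⟶ A) (f : A' ⟶ Y),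
      LeftOrth w A' ∧ IsIso (L.map s) ∧ L.map s ≫ φ = L.map f := by
  let Q : StructuredArrow (L.obj A) L → Prop := fun ψ =>
    ∃ (A' : C) (s : A' ⟶ A) (f : A' ⟶ ψ.right),
      LeftOrth w A' ∧ IsIso (L.map s) ∧ L.map s ≫ ψ.hom = L.map f
  refine Localization.induction_structuredArrow L (coneIn P) Q ?_ ?_ ?_ (StructuredArrow.mk φ)
  · exact ⟨A, 𝟙 A, 𝟙 A, hA, inferInstance, by simp⟩
  · rintro Y₁ Y₂ f φ ⟨A', s, f', hA', hs, h⟩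
    refine ⟨A', s, f' ≫ f, hA', hs, ?_⟩
    change L.map s ≫ φ = L.map f' at h
    change L.map s ≫ φ ≫ L.map f = L.map (f' ≫ f)
    rw [← Category.assoc, h, L.map_comp]
  · rintro Y₁ Y₂ t ht φ ⟨A', s, f', hA', hs, h⟩
    change L.map s ≫ φ = L.map f' at h
    obtain ⟨A'', s', f'', hA'', hs', h'⟩ := exists_ore_square hres hA' f' t ht
    have : IsIso (L.map s') := Localization.inverts L (coneIn P) s' hs'
    refine ⟨A'', s' ≫ s, f'', hA'', ?_, ?_⟩
    · rw [L.map_comp]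
      infer_instance
    · change L.map (s' ≫ s) ≫ φ ≫ (Localization.isoOfHom L (coneIn P) t ht).inv = L.map f''
      rw [← Category.assoc, Iso.comp_inv_eq, Localization.isoOfHom_hom, ← L.map_comp, ← h',
        L.map_comp, L.map_comp, Category.assoc, h]

/-- The orthogonality axiom for the weight structure on the quotient, on objects coming
from `C`. -/
lemma map_orthogonal [HasZeroMorphisms E] {w : WeightStructure C} {P : Set C}
    (hres : IsWeightStructureOn P (P ∩ w.LE) (P ∩ w.GE))
    (L : C ⥤ E) [L.IsLocalization (coneIn P)] [L.PreservesZeroMorphisms] {A N : C}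
    (hA : A ∈ w.LE) (hN : N ∈ w.GE) (φ : L.obj A ⟶ L.obj (N⟦(1 : ℤ)⟧)) : φ = 0 := by
  obtain ⟨A', s, f, hA', hs, h⟩ :=
    exists_fraction hres L (fun _ hY f => w.orthogonal hA hY f) φ
  rw [← cancel_epi (L.map s), h, hA' hN f, L.map_zero, comp_zero]

end Quotient

/-- let `w` be bounded and restrict to the full triangulated subcategory
`D` (with class of objects `P`); let `L : C ⥤ E` realize the Verdier quotient `C/D`,
so that `(C/D)_{w≥-n}` is the class of `X` with `X⟦n⟧` in the Karoubi-closure of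
`L(C_{w≥0})`.  (1) If `L(M) ∈ (C/D)_{w≥-n}`, then for any shifted weight decomposition
`w_{≤-n-1}M → M → w_{≥-n}M` one has `L(g) = 0` and `L(h)` splits.  (2) Conversely, if
there are `N ∈ C_{w≥-n}` and `h : M ⟶ N` with `L(h)` split, then
`L(M) ∈ (C/D)_{w≥-n}`. -/
theorem statement12 {E : Type*} [Category E] [HasZeroObject E] [HasShift E ℤ]
    [Preadditive E] [∀ n : ℤ, (shiftFunctor E n).Additive] [Pretriangulated E]
    (w : WeightStructure C) (hw : w.IsBounded)
    (P : Set C) (hP : IsTriangulatedSub P)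
    (hres : IsWeightStructureOn P (P ∩ w.LE) (P ∩ w.GE))
    (L : C ⥤ E) [L.CommShift ℤ] [L.IsTriangulated] [L.IsLocalization (coneIn P)]
    (n : ℤ) (M : C) :
    (((L.obj M)⟦n⟧ ∈ retractClosure (L.obj '' w.GE)) →
      ∀ (A B : C) (g : A ⟶ M) (h : M ⟶ B) (c : B ⟶ A⟦(1 : ℤ)⟧),
        Triangle.mk g h c ∈ (distTriang C) → A ∈ w.le (-n - 1) → B ∈ w.ge (-n) →
        (L.map g = 0 ∧ ∃ r : L.obj B ⟶ L.obj M, L.map h ≫ r = 𝟙 (L.obj M))) ∧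
    ((∃ (N : C) (h : M ⟶ N), N ∈ w.ge (-n) ∧
        ∃ r : L.obj N ⟶ L.obj M, L.map h ≫ r = 𝟙 (L.obj M)) →
      (L.obj M)⟦n⟧ ∈ retractClosure (L.obj '' w.GE)) := by
  constructor
  · rintro ⟨_, ⟨N, hN, rfl⟩, i, r, hir⟩ A B g h c hT hA hB
    have hA' : A⟦n + 1⟧ ∈ w.LE := by
      have e : n + 1 = -(-n - 1) := by ring
      rw [e]
      exact hA
    have hg : L.map g = 0 := by
      apply (shiftFunctor E (n + 1)).map_injective
      rw [Functor.map_zero]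
      -- `j` embeds `L(M)[n+1]` into `L(N[1])` as a retract.
      let j : (L.obj M)⟦n + 1⟧ ⟶ L.obj (N⟦(1 : ℤ)⟧) :=
        (shiftFunctorAdd E n 1).hom.app (L.obj M) ≫ i⟦(1 : ℤ)⟧' ≫
          (L.commShiftIso (1 : ℤ)).inv.app N
      have : Mono i := mono_of_mono_fac hir
      have : Mono (i⟦(1 : ℤ)⟧') := inferInstance
      have : Mono j := by
        dsimp only [j]
        infer_instance
      rw [← cancel_mono j, ← cancel_epi ((L.commShiftIso (n + 1)).hom.app A), zero_comp, comp_zero]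
      exact map_orthogonal hres L hA' hN _
    refine ⟨hg, ?_⟩
    obtain ⟨r, hr⟩ := Triangle.yoneda_exact₂ _ (L.map_distinguished _ hT) (𝟙 (L.obj M))
      (by change L.map g ≫ _ = 0; rw [hg, zero_comp])
    exact ⟨r, hr.symm⟩
  · rintro ⟨N, h, hN, r, hr⟩
    have hN' : N⟦n⟧ ∈ w.GE := by
      have e : n = -(-n) := by ring
      rw [e]
      exact hN
    refine ⟨_, ⟨_, hN', rfl⟩, (L.map h)⟦n⟧' ≫ (L.commShiftIso n).inv.app N,
      (L.commShiftIso n).hom.app N ≫ r⟦n⟧', ?_⟩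
    rw [Category.assoc, Iso.inv_hom_id_app_assoc, ← Functor.map_comp, hr, CategoryTheory.Functor.map_id]

end CWH
end

section
/- Let w be a bounded weight structure on a triangulated category C and let M be an object of C. If some weight complex t(M) of M is isomorphic to the zero complex in the homotopy category K(Hw) (i.e., t(M) is contractible), then M = 0. -/
/-!
If `M ∈ C_{w≥m}` then `ι l : w_{≤l}M ⟶ M` vanishes for `l < m` by orthogonality. Contractibility
of the weight complex propagates this upwards: if `ι l = 0`, then `ι (l+1)` factors as
`sπ (l+1) ≫ g` through `M^{-l-1}[l+1]`. Write the identity of `M^{-l-1}` as `s ≫ d + d ≫ s`.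
Since consecutive morphisms of a distinguished triangle compose to zero, `sπ (l+1)` kills the
summand starting with `d`; and `d[l+1] ≫ g` vanishes because its shift is
`sδ ≫ (ι (l+1))[1] = sδ ≫ (step (l+1))[1] ≫ (ι (l+2))[1] = 0`.
Hence `ι (l+1) = 0` (`ι_succ_eq_zero`). Finally, if `M ∈ C_{w≤n}`, then `M ⟶ w_{≥n+1}M` is zero,
so `ι n` is a split epimorphism; being zero, it forces `M = 0`.
-/

open CategoryTheory CategoryTheory.Limits CategoryTheory.Pretriangulated

namespace CWH

variable (C : Type*) [Category C] [HasZeroObject C] [HasShift C ℤ]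
  [Preadditive C] [∀ n : ℤ, (shiftFunctor C n).Additive] [Pretriangulated C]

variable {C}

namespace WeightStructure

variable (w : WeightStructure C)

lemma ge_of_ge_succ {X : C} {j : ℤ} (hX : X ∈ w.ge (j + 1)) : X ∈ w.ge j := by
  have e : X⟦(-j)⟧ ≅ (X⟦(-(j + 1))⟧)⟦(1 : ℤ)⟧ :=
    (shiftFunctorAdd' C (-(j + 1)) 1 (-j) (by omega)).app X
  exact w.retract_GE ⟨e.hom, e.inv, e.hom_inv_id⟩ (w.shift_GE hX)

lemma ge_anti {X : C} {j : ℤ} (k : ℕ) (hX : X ∈ w.ge (j + k)) : X ∈ w.ge j := by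
  induction k with
  | zero => simpa using hX
  | succ k ih =>
    apply ih
    apply w.ge_of_ge_succ
    rwa [show j + (k : ℤ) + 1 = j + ((k + 1 : ℕ) : ℤ) by push_cast; ring]

lemma eq_zero_of_le_of_ge {X Y : C} {i : ℤ} (hX : X ∈ w.le i) (hY : Y ∈ w.ge (i + 1))
    (f : X ⟶ Y) : f = 0 := by
  have e : Y⟦(-i)⟧ ≅ (Y⟦(-(i + 1))⟧)⟦(1 : ℤ)⟧ :=
    (shiftFunctorAdd' C (-(i + 1)) 1 (-i) (by omega)).app Y
  have h0 := w.orthogonal hX hY ((shiftFunctor C (-i)).map f ≫ e.hom)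
  apply (shiftFunctor C (-i)).map_injective
  rw [Functor.map_zero, ← cancel_mono e.hom, h0, zero_comp]

end WeightStructure

/-- The vanishing of the truncation morphisms propagates up the tower when the weight complex
is contractible. -/
lemma ι_succ_eq_zero {w : WeightStructure C} {M : C} (T : WeightPostnikovTower w M)
    (h : ChainHomotopicDown T.termAt T.termAt (towerD T) (towerD T)
      (fun l => 𝟙 (T.termAt l)) (fun _ => 0)) (l : ℤ) (hl : T.ι l = 0) :
    T.ι (l + 1) = 0 := by
  obtain ⟨s, hs⟩ := h
  obtain ⟨g, hg⟩ : ∃ g : (T.termAt (l + 1))⟦(l + 1 : ℤ)⟧ ⟶ M,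
      T.ι (l + 1) = T.sπ (l + 1) ≫ g :=
    Triangle.yoneda_exact₂ _ (T.step_dist l) (T.ι (l + 1)) ((T.step_ι l).trans hl)
  have hπ : T.sπ (l + 1) ≫ (shiftFunctor C (l + 1)).map (T.bd (l + 1) l) = 0 := by
    have h1 : T.sπ (l + 1) ≫ T.sδ l = 0 := comp_distTriang_mor_zero₂₃ _ (T.step_dist l)
    rw [← cancel_mono ((shiftFunctorAdd' C l 1 (l + 1) rfl).hom.app (T.termAt l)),
      Category.assoc, T.bd_eq, reassoc_of% h1, zero_comp, zero_comp]
  have hd : (shiftFunctor C (l + 1)).map (T.bd (l + 1 + 1) (l + 1)) ≫ g = 0 := by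
    have h2 : T.sδ (l + 1) ≫ (T.step (l + 1))⟦(1 : ℤ)⟧' = 0 :=
      comp_distTriang_mor_zero₃₁ _ (T.step_dist (l + 1))
    have nat := (shiftFunctorAdd' C (l + 1) 1 (l + 1 + 1) rfl).hom.naturality
      (T.bd (l + 1 + 1) (l + 1))
    rw [T.bd_eq] at nat
    apply (shiftFunctor C (1 : ℤ)).map_injective
    rw [← cancel_epi ((shiftFunctorAdd' C (l + 1) 1 (l + 1 + 1) rfl).hom.app
      (T.termAt (l + 1 + 1))), Functor.map_comp]
    erw [← reassoc_of% nat]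
    rw [← Functor.map_comp, ← hg, ← T.step_ι (l + 1), Functor.map_comp, reassoc_of% h2]
    simp
  have key := congrArg (fun φ => T.sπ (l + 1) ≫ (shiftFunctor C (l + 1)).map φ ≫ g) (hs l)
  simp only [towerD, sub_zero, Functor.map_add, Functor.map_comp,
    Preadditive.add_comp, Category.assoc, hd, comp_zero, zero_add,
    reassoc_of% hπ, zero_comp] at key
  rw [hg, ← key, (shiftFunctor C (l + 1)).map_id, Category.id_comp]

/-- for a bounded weight structure, if a weight complex of `M` is
contractible (the identity is chain homotopic to zero, i.e., `t(M) ≅ 0` in `K(Hw)`),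
then `M = 0`. -/
theorem statement14 (w : WeightStructure C) (hw : w.IsBounded) (M : C)
    (T : WeightPostnikovTower w M)
    (h : ChainHomotopicDown T.termAt T.termAt (towerD T) (towerD T)
      (fun l => 𝟙 (T.termAt l)) (fun _ => 0)) :
    IsZero M := by
  obtain ⟨⟨n, hn⟩, m, hm⟩ := hw M
  -- A common starting index `n - k` lying both below `m` and below or at `n`.
  obtain ⟨k, hk⟩ : ∃ k : ℕ, n - k + 1 ≤ m := ⟨(n + 1 - m).toNat, by omega⟩
  have hbase : T.ι (n - k) = 0 := by
    refine w.eq_zero_of_le_of_ge (T.trunc_mem _) (w.ge_anti (m - (n - k + 1)).toNat ?_) _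
    rwa [show n - (k : ℤ) + 1 + ((m - (n - k + 1)).toNat : ℤ) = m by omega]
  have hup : ∀ j : ℕ, T.ι (n - k + j) = 0 := by
    intro j
    induction j with
    | zero => rwa [Nat.cast_zero, add_zero]
    | succ j ih =>
      rw [show n - (k : ℤ) + ((j + 1 : ℕ) : ℤ) = n - k + j + 1 by push_cast; ring]
      exact ι_succ_eq_zero T h _ ih
  have hι : T.ι n = 0 := by
    rw [show n = n - (k : ℤ) + (k : ℤ) by ring]
    exact hup k
  have hπ : T.coneπ n = 0 := w.eq_zero_of_le_of_ge hn (T.cone_mem n) _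
  obtain ⟨r, hr⟩ : ∃ r : M ⟶ T.trunc n, 𝟙 M = r ≫ T.ι n :=
    Triangle.coyoneda_exact₂ _ (T.trunc_dist n) (𝟙 M) ((Category.id_comp _).trans hπ)
  rw [IsZero.iff_id_eq_zero, hr, hι, comp_zero]

end CWH
end
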